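/- Let N ≥ 1 and p, q ≥ 0 with pq > 1 and (pq − 1)/(max{p,q} + 1) > 2/N. Then there exist nonnegative measurable functions u₀, v₀ on ℝ^N, not both identically zero, such that the system (S) possesses a global-in-time solution (u,v) on ℝ^N × (0,∞) with u(x,t) > 0 and v(x,t) > 0 for a.e. x ∈ ℝ^N and all t > 0. -/

import Mathlib

open MeasureTheory ENNReal Filter

noncomputable section

/-- Euclidean space `ℝ^N`. -/
abbrev Euc (N : ℕ) := EuclideanSpace ℝ (Fin N)

/-- The heat semigroup applied to a (nonnegative) function `φ` on `ℝ^N`, with values in `[0,∞]`: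
`[S(t)φ](x) = ∫ (4πt)^{-N/2} exp(-|x-y|²/(4t)) φ(y) dy`. -/
noncomputable def heatS (N : ℕ) (t : ℝ) (φ : Euc N → ℝ) (x : Euc N) : ℝ≥0∞ :=
  ∫⁻ y, ENNReal.ofReal
    ((4 * Real.pi * t) ^ (-(N : ℝ) / 2) * Real.exp (-‖x - y‖ ^ 2 / (4 * t)) * φ y)

/-- The `L^∞` norm of `S(t)φ` on `ℝ^N`. -/
noncomputable def heatSup (N : ℕ) (t : ℝ) (φ : Euc N → ℝ) : ℝ≥0∞ :=
  essSup (heatS N t φ) volume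

/-- The `L^{r,∞}(E)` quasinorm: for `1 < r < ∞` it is
`sup_{λ>0} λ |{x ∈ E : |f x| > λ}|^{1/r}`; for `r = 1` (resp. `r = ∞`)
it is the usual `L¹(E)` (resp. `L^∞(E)`) norm. -/
noncomputable def wnorm (N : ℕ) (r : ℝ≥0∞) (f : Euc N → ℝ) (E : Set (Euc N)) : ℝ≥0∞ :=
  if r = 1 then ∫⁻ x in E, ENNReal.ofReal |f x|
  else if r = ⊤ then essSup (fun x => ENNReal.ofReal |f x|) (volume.restrict E)
  else ⨆ (l : ℝ) (_ : 0 < l), ENNReal.ofReal l * (volume {x ∈ E | l < |f x|}) ^ (1 / r.toReal)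

/-- The uniformly local quasinorm `|||f|||_{r,ρ} = sup_x ‖f‖_{L^{r,∞}(B(x,ρ))}`
(for `r = ∞` it is the `L^∞(ℝ^N)` norm). -/
noncomputable def ulocNorm (N : ℕ) (r : ℝ≥0∞) (ρ : ℝ) (f : Euc N → ℝ) : ℝ≥0∞ :=
  if r = ⊤ then essSup (fun x => ENNReal.ofReal |f x|) volume
  else ⨆ x : Euc N, wnorm N r f (Metric.ball x ρ)

/-- `u ∈ L^∞(τ, T-τ; L^∞(ℝ^N))` for every `τ ∈ (0, T/2)`. -/
def LocBdd (N : ℕ) (T : ℝ≥0∞) (u : Euc N → ℝ → ℝ) : Prop :=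
  ∀ τ : ℝ, 0 < τ → ENNReal.ofReal (2 * τ) < T →
    ∃ M : ℝ, ∀ t : ℝ, τ ≤ t → ENNReal.ofReal (t + τ) ≤ T →
      ∀ᵐ x ∂(volume : Measure (Euc N)), |u x t| ≤ M

/-- Regularity requirements on a pair `(u,v)`: nonnegativity, joint measurability and
uniform boundedness away from `t = 0` and `t = T`. -/
def PairRegular (N : ℕ) (T : ℝ≥0∞) (u v : Euc N → ℝ → ℝ) : Prop :=
  (∀ x t, 0 ≤ u x t) ∧ (∀ x t, 0 ≤ v x t) ∧
  Measurable (Function.uncurry u) ∧ Measurable (Function.uncurry v) ∧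
  LocBdd N T u ∧ LocBdd N T v

/-- The Duhamel identities for the system (S) `∂ₜu = Δu + v^p`, `∂ₜv = Δv + u^q` at time `t`. -/
def DuhamelSys (N : ℕ) (p q : ℝ) (u₀ v₀ : Euc N → ℝ) (u v : Euc N → ℝ → ℝ) (t : ℝ) : Prop :=
  (∀ᵐ x ∂(volume : Measure (Euc N)), ENNReal.ofReal (u x t) =
      heatS N t u₀ x + ∫⁻ s in Set.Ioo 0 t, heatS N (t - s) (fun y => v y s ^ p) x) ∧
  (∀ᵐ x ∂(volume : Measure (Euc N)), ENNReal.ofReal (v x t) =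
      heatS N t v₀ x + ∫⁻ s in Set.Ioo 0 t, heatS N (t - s) (fun y => u y s ^ q) x)

/-- The Duhamel inequalities (`≥`, with finite left-hand side) for the system (S) at time `t`. -/
def DuhamelSuperSys (N : ℕ) (p q : ℝ) (u₀ v₀ : Euc N → ℝ) (u v : Euc N → ℝ → ℝ) (t : ℝ) : Prop :=
  (∀ᵐ x ∂(volume : Measure (Euc N)),
      heatS N t u₀ x + (∫⁻ s in Set.Ioo 0 t, heatS N (t - s) (fun y => v y s ^ p) x) ≤
        ENNReal.ofReal (u x t)) ∧
  (∀ᵐ x ∂(volume : Measure (Euc N)),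
      heatS N t v₀ x + (∫⁻ s in Set.Ioo 0 t, heatS N (t - s) (fun y => u y s ^ q) x) ≤
        ENNReal.ofReal (v x t))

/-- `(u,v)` is a solution of the system (S) on `ℝ^N × (0,T)`. -/
def IsSolSys (N : ℕ) (p q : ℝ) (u₀ v₀ : Euc N → ℝ) (T : ℝ≥0∞) (u v : Euc N → ℝ → ℝ) : Prop :=
  PairRegular N T u v ∧
  ∀ t : ℝ, 0 < t → ENNReal.ofReal t < T → DuhamelSys N p q u₀ v₀ u v t

/-- `(u,v)` is a supersolution of the system (S) on `ℝ^N × (0,T)`. -/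
def IsSuperSys (N : ℕ) (p q : ℝ) (u₀ v₀ : Euc N → ℝ) (T : ℝ≥0∞) (u v : Euc N → ℝ → ℝ) : Prop :=
  PairRegular N T u v ∧
  ∀ t : ℝ, 0 < t → ENNReal.ofReal t < T → DuhamelSuperSys N p q u₀ v₀ u v t

/-- `(u,v)` is the minimal solution of the system (S) on `ℝ^N × (0,T)`. -/
def IsMinSolSys (N : ℕ) (p q : ℝ) (u₀ v₀ : Euc N → ℝ) (T : ℝ≥0∞)
    (u v : Euc N → ℝ → ℝ) : Prop :=
  IsSolSys N p q u₀ v₀ T u v ∧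
  ∀ u' v' : Euc N → ℝ → ℝ, IsSolSys N p q u₀ v₀ T u' v' →
    ∀ t : ℝ, 0 < t → ENNReal.ofReal t < T →
      (∀ᵐ x ∂(volume : Measure (Euc N)), u x t ≤ u' x t) ∧
      (∀ᵐ x ∂(volume : Measure (Euc N)), v x t ≤ v' x t)

/-- Regularity requirements on a scalar function `w`. -/
def ScalarRegular (N : ℕ) (T : ℝ≥0∞) (w : Euc N → ℝ → ℝ) : Prop :=
  (∀ x t, 0 ≤ w x t) ∧ Measurable (Function.uncurry w) ∧ LocBdd N T w

/-- The Duhamel identity for the scalar problem (E) `∂ₜw = Δw + α w^A + β w^B` at time `t`. -/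
def DuhamelScalar (N : ℕ) (α β A B : ℝ) (w₀ : Euc N → ℝ) (w : Euc N → ℝ → ℝ) (t : ℝ) : Prop :=
  ∀ᵐ x ∂(volume : Measure (Euc N)), ENNReal.ofReal (w x t) =
    heatS N t w₀ x +
      ∫⁻ s in Set.Ioo 0 t, heatS N (t - s) (fun y => α * w y s ^ A + β * w y s ^ B) x

/-- The Duhamel inequality (`≥`, with finite left-hand side) for the scalar problem (E). -/
def DuhamelSuperScalar (N : ℕ) (α β A B : ℝ) (w₀ : Euc N → ℝ) (w : Euc N → ℝ → ℝ)
    (t : ℝ) : Prop :=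
  ∀ᵐ x ∂(volume : Measure (Euc N)),
    heatS N t w₀ x +
        (∫⁻ s in Set.Ioo 0 t, heatS N (t - s) (fun y => α * w y s ^ A + β * w y s ^ B) x) ≤
      ENNReal.ofReal (w x t)

/-- `w` is a solution of the scalar problem (E) on `ℝ^N × (0,T)`. -/
def IsSolScalar (N : ℕ) (α β A B : ℝ) (w₀ : Euc N → ℝ) (T : ℝ≥0∞)
    (w : Euc N → ℝ → ℝ) : Prop :=
  ScalarRegular N T w ∧
  ∀ t : ℝ, 0 < t → ENNReal.ofReal t < T → DuhamelScalar N α β A B w₀ w t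

/-- `w` is a supersolution of the scalar problem (E) on `ℝ^N × (0,T)`. -/
def IsSuperScalar (N : ℕ) (α β A B : ℝ) (w₀ : Euc N → ℝ) (T : ℝ≥0∞)
    (w : Euc N → ℝ → ℝ) : Prop :=
  ScalarRegular N T w ∧
  ∀ t : ℝ, 0 < t → ENNReal.ofReal t < T → DuhamelSuperScalar N α β A B w₀ w t

/-- The Duhamel identities for the strongly coupled system (SC)
`∂ₜu = Δu + u^{p₁} v^{p₂}`, `∂ₜv = Δv + u^{q₁} v^{q₂}` at time `t`. -/
def DuhamelSC (N : ℕ) (p₁ p₂ q₁ q₂ : ℝ) (u₀ v₀ : Euc N → ℝ) (u v : Euc N → ℝ → ℝ)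
    (t : ℝ) : Prop :=
  (∀ᵐ x ∂(volume : Measure (Euc N)), ENNReal.ofReal (u x t) =
      heatS N t u₀ x +
        ∫⁻ s in Set.Ioo 0 t, heatS N (t - s) (fun y => u y s ^ p₁ * v y s ^ p₂) x) ∧
  (∀ᵐ x ∂(volume : Measure (Euc N)), ENNReal.ofReal (v x t) =
      heatS N t v₀ x +
        ∫⁻ s in Set.Ioo 0 t, heatS N (t - s) (fun y => u y s ^ q₁ * v y s ^ q₂) x)

/-- `(u,v)` is a solution of the strongly coupled system (SC) on `ℝ^N × (0,T)`. -/
def IsSolSC (N : ℕ) (p₁ p₂ q₁ q₂ : ℝ) (u₀ v₀ : Euc N → ℝ) (T : ℝ≥0∞)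
    (u v : Euc N → ℝ → ℝ) : Prop :=
  PairRegular N T u v ∧
  ∀ t : ℝ, 0 < t → ENNReal.ofReal t < T → DuhamelSC N p₁ p₂ q₁ q₂ u₀ v₀ u v t

/-!
Monotone iteration from zero converges to a solution below any supersolution, so it is enough to
find a global one. Take `U = A (1+t)^{-a} exp(-κ|x|²/(4(1+t)))` and
`V = B (1+t)^{-b} exp(-μ|x|²/(4(1+t)))`. The scaling of (S) forces `b p = a + 1` and `a q = b + 1`,
that is, `a = (p+1)/(pq-1)` and `b = (q+1)/(pq-1)`, and the exponent condition says exactly that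
`a, b < N/2`: both decay more slowly than the heat kernel, so the Duhamel integrals grow no faster
than `U` and `V`. Powers below one widen a Gaussian; `κ = min p 1` and `μ = min q 1` absorb this.
Since `pq ≠ 1`, the two amplitude conditions `B^p C ≤ A` and `A^q D ≤ B` can be met at once.
-/

section HeatSemigroup

variable {N : ℕ} {t : ℝ} {φ : Euc N → ℝ} {x : Euc N}

/-- The Gauss–Weierstrass kernel `(4πt)^{-N/2} exp(-|x-y|²/(4t))` of `heatS`, valued in `[0,∞]`. -/
def heatKernel (t : ℝ) (x y : Euc N) : ℝ≥0∞ :=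
  ENNReal.ofReal ((4 * Real.pi * t) ^ (-(N : ℝ) / 2) * Real.exp (-‖x - y‖ ^ 2 / (4 * t)))

/-- The heat semigroup acting on `[0,∞]`-valued functions. Unlike those of `heatS`, its arguments
are closed under the suprema that arise in monotone iteration. -/
def heatSemigroup (t : ℝ) (φ : Euc N → ℝ≥0∞) (x : Euc N) : ℝ≥0∞ :=
  ∫⁻ y, heatKernel t x y * φ y

lemma heatS_eq_heatSemigroup (ht : 0 ≤ t) :
    heatS N t φ x = heatSemigroup t (fun y => ENNReal.ofReal (φ y)) x := by
  unfold heatS heatSemigroup heatKernel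
  refine lintegral_congr fun y => ENNReal.ofReal_mul ?_
  positivity

lemma heatS_const_mul {c : ℝ} (hc : 0 ≤ c) :
    heatS N t (fun y => c * φ y) x = ENNReal.ofReal c * heatS N t φ x := by
  unfold heatS
  rw [← lintegral_const_mul' _ _ ENNReal.ofReal_ne_top]
  refine lintegral_congr fun y => ?_
  rw [← ENNReal.ofReal_mul hc, mul_left_comm]

lemma heatS_mono {ψ : Euc N → ℝ} (ht : 0 ≤ t) (h : ∀ y, φ y ≤ ψ y) :
    heatS N t φ x ≤ heatS N t ψ x := by
  unfold heatS
  gcongr with y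
  exact h y

lemma heatS_pos (ht : 0 < t) (hφ : Measurable φ) (hpos : ∃ᵐ y, 0 < φ y) :
    0 < heatS N t φ x := by
  refine pos_iff_ne_zero.2 fun hzero => hpos ?_
  unfold heatS at hzero
  rw [lintegral_eq_zero_iff (by fun_prop)] at hzero
  filter_upwards [hzero] with y hy hφy
  refine (ENNReal.ofReal_pos.2 ?_).ne' hy
  positivity

end HeatSemigroup

section Gaussian

lemma lintegral_exp_neg_mul_sq_norm_sub {V : Type*} [NormedAddCommGroup V] [InnerProductSpace ℝ V]
    [FiniteDimensional ℝ V] [MeasurableSpace V] [BorelSpace V] {b : ℝ} (hb : 0 < b) (w : V) :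
    ∫⁻ y : V, ENNReal.ofReal (Real.exp (-b * ‖y - w‖ ^ 2)) =
      ENNReal.ofReal ((Real.pi / b) ^ ((Module.finrank ℝ V : ℝ) / 2)) := by
  have hintegral := GaussianFourier.integral_rexp_neg_mul_sq_norm (V := V) hb
  have hintegrable : Integrable fun y : V => Real.exp (-b * ‖y‖ ^ 2) :=
    Integrable.of_integral_ne_zero (by rw [hintegral]; positivity)
  rw [lintegral_sub_right_eq_self (fun y : V => ENNReal.ofReal (Real.exp (-b * ‖y‖ ^ 2))),
    ← ofReal_integral_eq_lintegral_ofReal hintegrable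
      (Eventually.of_forall fun y => (Real.exp_pos _).le), hintegral]

lemma neg_sq_norm_sub_div_add_neg_mul_sq_norm {V : Type*} [NormedAddCommGroup V]
    [InnerProductSpace ℝ V] {t c : ℝ} (ht : t ≠ 0) (hct : 1 + 4 * c * t ≠ 0) (x y : V) :
    -‖x - y‖ ^ 2 / (4 * t) + -c * ‖y‖ ^ 2 =
      -(c * ‖x‖ ^ 2 / (1 + 4 * c * t)) +
        -((1 + 4 * c * t) / (4 * t)) * ‖y - (1 / (1 + 4 * c * t)) • x‖ ^ 2 := by
  rw [norm_sub_sq_real, norm_sub_sq_real, norm_smul, inner_smul_right, real_inner_comm y x,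
    mul_pow, Real.norm_eq_abs, sq_abs]
  generalize hd : 1 + 4 * c * t = d at *
  obtain rfl : c = (d - 1) / (4 * t) := by
    rw [← hd]
    field_simp
    ring
  field_simp
  ring

variable {N : ℕ}

lemma heatS_exp_neg_mul_sq_norm {t c : ℝ} (ht : 0 < t) (hc : 0 ≤ c) (x : Euc N) :
    heatS N t (fun y => Real.exp (-c * ‖y‖ ^ 2)) x =
      ENNReal.ofReal ((1 + 4 * c * t) ^ (-(N : ℝ) / 2) *
        Real.exp (-(c * ‖x‖ ^ 2 / (1 + 4 * c * t)))) := by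
  have hd : 0 < 1 + 4 * c * t := by positivity
  have hT : 0 < 4 * Real.pi * t := by positivity
  have hsquare (y : Euc N) :
      (4 * Real.pi * t) ^ (-(N : ℝ) / 2) * Real.exp (-‖x - y‖ ^ 2 / (4 * t)) *
          Real.exp (-c * ‖y‖ ^ 2) =
        (4 * Real.pi * t) ^ (-(N : ℝ) / 2) * Real.exp (-(c * ‖x‖ ^ 2 / (1 + 4 * c * t))) *
          Real.exp (-((1 + 4 * c * t) / (4 * t)) * ‖y - (1 / (1 + 4 * c * t)) • x‖ ^ 2) := by
    rw [mul_assoc _ (Real.exp _), mul_assoc _ (Real.exp _), ← Real.exp_add, ← Real.exp_add,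
      neg_sq_norm_sub_div_add_neg_mul_sq_norm ht.ne' hd.ne']
  have hmass : (4 * Real.pi * t) ^ (-(N : ℝ) / 2) *
      (Real.pi / ((1 + 4 * c * t) / (4 * t))) ^ ((N : ℝ) / 2) =
        (1 + 4 * c * t) ^ (-(N : ℝ) / 2) := by
    have hquot : Real.pi / ((1 + 4 * c * t) / (4 * t)) =
        (4 * Real.pi * t) / (1 + 4 * c * t) := by field_simp
    rw [hquot, neg_div, Real.div_rpow hT.le hd.le, Real.rpow_neg hT.le, Real.rpow_neg hd.le]
    field_simp
  unfold heatS
  simp_rw [hsquare]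
  simp_rw [ENNReal.ofReal_mul (show 0 ≤ (4 * Real.pi * t) ^ (-(N : ℝ) / 2) *
    Real.exp (-(c * ‖x‖ ^ 2 / (1 + 4 * c * t))) by positivity)]
  rw [lintegral_const_mul' _ _ ENNReal.ofReal_ne_top,
    lintegral_exp_neg_mul_sq_norm_sub (by positivity), finrank_euclideanSpace_fin,
    ← ENNReal.ofReal_mul (by positivity), mul_right_comm, hmass]

lemma heatS_exp_neg_div_mul_sq_norm_le {κ σ t : ℝ} (hκ : 0 < κ) (hκ1 : κ ≤ 1) (hσ : 0 < σ)
    (ht : 0 < t) (x : Euc N) :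
    heatS N t (fun y => Real.exp (-(κ / (4 * σ)) * ‖y‖ ^ 2)) x ≤
      ENNReal.ofReal ((κ * ((σ + t) / σ)) ^ (-(N : ℝ) / 2) *
        Real.exp (-(κ / (4 * (σ + t))) * ‖x‖ ^ 2)) := by
  have hlower : κ * ((σ + t) / σ) ≤ 1 + 4 * (κ / (4 * σ)) * t := by
    field_simp
    nlinarith
  have hupper : 4 * σ * (1 + 4 * (κ / (4 * σ)) * t) ≤ 4 * (σ + t) := by
    field_simp
    nlinarith
  rw [heatS_exp_neg_mul_sq_norm ht (by positivity)]
  refine ENNReal.ofReal_le_ofReal (mul_le_mul ?_ ?_ (by positivity) (by positivity))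
  · exact Real.rpow_le_rpow_of_nonpos (by positivity) hlower
      (div_nonpos_of_nonpos_of_nonneg (by simp) two_pos.le)
  · rw [mul_div_right_comm, div_div, ← neg_mul]
    gcongr

end Gaussian

section MildSolution

variable {N : ℕ}

lemma measurable_heatSemigroup {α : Type*} [MeasurableSpace α] {τ : α → ℝ} {ξ : α → Euc N}
    {f : α → Euc N → ℝ≥0∞} (hτ : Measurable τ) (hξ : Measurable ξ)
    (hf : Measurable (Function.uncurry f)) :
    Measurable fun a => heatSemigroup (τ a) (f a) (ξ a) := by
  have hkernel : Measurable fun z : α × Euc N => heatKernel (τ z.1) (ξ z.1) z.2 := by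
    unfold heatKernel
    fun_prop
  exact (hkernel.mul hf).lintegral_prod_right'

lemma heatSemigroup_mono {t : ℝ} {x : Euc N} {φ ψ : Euc N → ℝ≥0∞} (h : ∀ᵐ y, φ y ≤ ψ y) :
    heatSemigroup t φ x ≤ heatSemigroup t ψ x :=
  lintegral_mono_ae (h.mono fun _ hy => mul_le_mul_right hy _)

lemma heatSemigroup_iSup {φ : ℕ → Euc N → ℝ≥0∞} (hφ : ∀ n, Measurable (φ n))
    (hmono : Monotone φ) (t : ℝ) (x : Euc N) :
    heatSemigroup t (fun y => ⨆ n, φ n y) x = ⨆ n, heatSemigroup t (φ n) x := by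
  have hkernel : Measurable fun y => heatKernel t x y := by
    unfold heatKernel
    fun_prop
  unfold heatSemigroup
  simp_rw [ENNReal.mul_iSup]
  exact lintegral_iSup (fun n => hkernel.mul (hφ n))
    fun m n hmn y => mul_le_mul_right (hmono hmn y) _

/-- The mild solution of `∂ₜu = Δu + f` with initial value `φ`, given by Duhamel's formula. -/
def mildSolution (φ : Euc N → ℝ≥0∞) (f : Euc N → ℝ → ℝ≥0∞) (x : Euc N) (t : ℝ) : ℝ≥0∞ :=
  heatSemigroup t φ x + ∫⁻ s in Set.Ioo 0 t, heatSemigroup (t - s) (fun y => f y s) x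

lemma measurable_mildSolution {φ : Euc N → ℝ≥0∞} {f : Euc N → ℝ → ℝ≥0∞} (hφ : Measurable φ)
    (hf : Measurable (Function.uncurry f)) :
    Measurable (Function.uncurry (mildSolution φ f)) := by
  have hinit : Measurable fun z : Euc N × ℝ => heatSemigroup z.2 φ z.1 :=
    measurable_heatSemigroup measurable_snd measurable_fst (hφ.comp measurable_snd)
  have hslice : Measurable fun w : (Euc N × ℝ) × ℝ =>
      heatSemigroup (w.1.2 - w.2) (fun y => f y w.2) w.1.1 :=
    measurable_heatSemigroup (by fun_prop) (by fun_prop)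
      (hf.comp (measurable_snd.prodMk measurable_fst.snd))
  have htimes : MeasurableSet {w : (Euc N × ℝ) × ℝ | w.2 ∈ Set.Ioo 0 w.1.2} :=
    (measurableSet_lt measurable_const measurable_snd).inter
      (measurableSet_lt measurable_snd measurable_fst.snd)
  have hsource := (hslice.indicator htimes).lintegral_prod_right' (ν := (volume : Measure ℝ))
  convert hinit.add hsource using 1
  ext z
  simp only [Pi.add_apply, Function.uncurry, mildSolution]
  rw [← lintegral_indicator measurableSet_Ioo]
  rfl

variable {φ : Euc N → ℝ≥0∞} {x : Euc N} {t : ℝ}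

lemma mildSolution_mono {f g : Euc N → ℝ → ℝ≥0∞}
    (h : ∀ s ∈ Set.Ioo 0 t, ∀ᵐ y, f y s ≤ g y s) :
    mildSolution φ f x t ≤ mildSolution φ g x t :=
  add_le_add_right
    (setLIntegral_mono' measurableSet_Ioo fun s hs => heatSemigroup_mono (h s hs)) _

lemma mildSolution_congr {f g : Euc N → ℝ → ℝ≥0∞}
    (h : ∀ s ∈ Set.Ioo 0 t, ∀ᵐ y, f y s = g y s) :
    mildSolution φ f x t = mildSolution φ g x t :=
  le_antisymm (mildSolution_mono fun s hs => (h s hs).mono fun _ => le_of_eq)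
    (mildSolution_mono fun s hs => (h s hs).mono fun _ => ge_of_eq)

lemma mildSolution_iSup {f : ℕ → Euc N → ℝ → ℝ≥0∞}
    (hf : ∀ n, Measurable (Function.uncurry (f n))) (hmono : Monotone f) :
    mildSolution φ (⨆ n, f n) x t = ⨆ n, mildSolution φ (f n) x t := by
  have hslice (s : ℝ) : heatSemigroup (t - s) (fun y => (⨆ n, f n) y s) x =
      ⨆ n, heatSemigroup (t - s) (fun y => f n y s) x := by
    rw [← heatSemigroup_iSup (fun n => (hf n).of_uncurry_right) fun m n hmn y => hmono hmn y s]
    simp only [iSup_apply]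
  unfold mildSolution
  simp_rw [hslice]
  rw [lintegral_iSup, ENNReal.add_iSup]
  · exact fun n => measurable_heatSemigroup (by fun_prop) measurable_const
      ((hf n).comp measurable_swap)
  · exact fun m n hmn s => heatSemigroup_mono (Eventually.of_forall fun y => hmono hmn y s)

lemma heatS_add_setLIntegral_heatS_rpow_eq_mildSolution {u₀ : Euc N → ℝ} {v : Euc N → ℝ → ℝ}
    {p : ℝ} (ht : 0 ≤ t) (hp : 0 ≤ p) (hv : ∀ y s, 0 ≤ v y s) :
    heatS N t u₀ x + ∫⁻ s in Set.Ioo 0 t, heatS N (t - s) (fun y => v y s ^ p) x =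
      mildSolution (fun y => ENNReal.ofReal (u₀ y))
        (fun y s => ENNReal.ofReal (v y s) ^ p) x t := by
  simp only [mildSolution, ENNReal.ofReal_rpow_of_nonneg (hv _ _) hp]
  rw [heatS_eq_heatSemigroup ht]
  congr 1
  exact setLIntegral_congr_fun measurableSet_Ioo fun s hs =>
    heatS_eq_heatSemigroup (sub_nonneg.2 hs.2.le)

end MildSolution

section Picard

variable {N : ℕ} {p q : ℝ} {φ ψ : Euc N → ℝ≥0∞}

lemma iSup_rpow_of_nonneg {ι : Sort*} [Nonempty ι] {r : ℝ} (hr : 0 ≤ r) (f : ι → ℝ≥0∞) :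
    (⨆ i, f i) ^ r = ⨆ i, f i ^ r :=
  (ENNReal.monotone_rpow_of_nonneg hr).map_ciSup_of_continuousAt
    ENNReal.continuous_rpow_const.continuousAt

/-- The map whose fixed points are the `[0,∞]`-valued mild solutions of the system (S). -/
def picardMap (p q : ℝ) (φ ψ : Euc N → ℝ≥0∞)
    (w : (Euc N → ℝ → ℝ≥0∞) × (Euc N → ℝ → ℝ≥0∞)) :
    (Euc N → ℝ → ℝ≥0∞) × (Euc N → ℝ → ℝ≥0∞) :=
  (mildSolution φ fun x t => w.2 x t ^ p, mildSolution ψ fun x t => w.1 x t ^ q)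

lemma monotone_picardMap (hp : 0 ≤ p) (hq : 0 ≤ q) : Monotone (picardMap p q φ ψ) :=
  fun _ _ hw =>
    ⟨fun _ _ => mildSolution_mono fun s _ => Eventually.of_forall fun y =>
        ENNReal.rpow_le_rpow (hw.2 y s) hp,
      fun _ _ => mildSolution_mono fun s _ => Eventually.of_forall fun y =>
        ENNReal.rpow_le_rpow (hw.1 y s) hq⟩

/-- The Picard iterates of the system (S), started from zero. -/
def picardIterate (p q : ℝ) (φ ψ : Euc N → ℝ≥0∞) (n : ℕ) :
    (Euc N → ℝ → ℝ≥0∞) × (Euc N → ℝ → ℝ≥0∞) :=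
  (picardMap p q φ ψ)^[n] ⊥

lemma picardIterate_succ (n : ℕ) :
    picardIterate p q φ ψ (n + 1) = picardMap p q φ ψ (picardIterate p q φ ψ n) :=
  Function.iterate_succ_apply' _ _ _

lemma monotone_picardIterate (hp : 0 ≤ p) (hq : 0 ≤ q) : Monotone (picardIterate p q φ ψ) :=
  (monotone_picardMap hp hq).monotone_iterate_of_le_map bot_le

lemma measurable_picardIterate (hφ : Measurable φ) (hψ : Measurable ψ) (n : ℕ) :
    Measurable (Function.uncurry (picardIterate p q φ ψ n).1) ∧
      Measurable (Function.uncurry (picardIterate p q φ ψ n).2) := by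
  induction n with
  | zero => exact ⟨measurable_const, measurable_const⟩
  | succ n ih =>
    rw [picardIterate_succ]
    exact ⟨measurable_mildSolution hφ (ih.2.pow_const p),
      measurable_mildSolution hψ (ih.1.pow_const q)⟩

lemma mildSolution_rpow_iSup (hp : 0 ≤ p) {f : ℕ → Euc N → ℝ → ℝ≥0∞}
    (hf : ∀ n, Measurable (Function.uncurry (f n))) (hmono : Monotone f) :
    mildSolution φ (fun y s => (⨆ n, f n) y s ^ p) =
      ⨆ n, mildSolution φ fun y s => f n y s ^ p := by
  have hpow : (fun y s => (⨆ n, f n) y s ^ p) = ⨆ n, fun y s => f n y s ^ p := by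
    ext y s
    simp only [iSup_apply, iSup_rpow_of_nonneg hp]
  ext x t
  rw [hpow, mildSolution_iSup (fun n => (hf n).pow_const p)
    fun m n hmn y s => ENNReal.rpow_le_rpow (hmono hmn y s) hp]
  simp only [iSup_apply]

/-- The increasing limit of the Picard iterates: a mild solution of (S) that may take the
value `∞`. -/
def picardLimit (p q : ℝ) (φ ψ : Euc N → ℝ≥0∞) : (Euc N → ℝ → ℝ≥0∞) × (Euc N → ℝ → ℝ≥0∞) :=
  ⨆ n, picardIterate p q φ ψ n

lemma measurable_picardLimit (hφ : Measurable φ) (hψ : Measurable ψ) :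
    Measurable (Function.uncurry (picardLimit p q φ ψ).1) ∧
      Measurable (Function.uncurry (picardLimit p q φ ψ).2) := by
  have hmeas := measurable_picardIterate (p := p) (q := q) hφ hψ
  simp only [picardLimit, Prod.fst_iSup, Prod.snd_iSup, Function.uncurry_def, iSup_apply]
  exact ⟨Measurable.iSup fun n => (hmeas n).1, Measurable.iSup fun n => (hmeas n).2⟩

lemma isFixedPt_picardLimit (hp : 0 ≤ p) (hq : 0 ≤ q) (hφ : Measurable φ) (hψ : Measurable ψ) :
    Function.IsFixedPt (picardMap p q φ ψ) (picardLimit p q φ ψ) := by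
  have hmono := monotone_picardIterate (φ := φ) (ψ := ψ) hp hq
  have hmeas := measurable_picardIterate (p := p) (q := q) hφ hψ
  calc picardMap p q φ ψ (picardLimit p q φ ψ)
      = ⨆ n, picardMap p q φ ψ (picardIterate p q φ ψ n) := by
        refine Prod.ext ?_ ?_
        · simp only [picardMap, picardLimit, Prod.fst_iSup, Prod.snd_iSup]
          exact mildSolution_rpow_iSup hp (fun n => (hmeas n).2) fun _ _ h => (hmono h).2
        · simp only [picardMap, picardLimit, Prod.fst_iSup, Prod.snd_iSup]
          exact mildSolution_rpow_iSup hq (fun n => (hmeas n).1) fun _ _ h => (hmono h).1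
    _ = ⨆ n, picardIterate p q φ ψ (n + 1) := by simp only [picardIterate_succ]
    _ = picardLimit p q φ ψ := hmono.iSup_nat_add 1

end Picard

section Supersolution

variable {N : ℕ} {p q : ℝ} {u₀ v₀ : Euc N → ℝ} {T : ℝ≥0∞} {U V : Euc N → ℝ → ℝ}

lemma LocBdd.of_ae_le {u : Euc N → ℝ → ℝ} (hU : LocBdd N T U) (hu : ∀ x t, 0 ≤ u x t)
    (h : ∀ t, 0 < t → ENNReal.ofReal t < T → ∀ᵐ x, u x t ≤ U x t) : LocBdd N T u := by
  intro τ hτ hτT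
  obtain ⟨M, hM⟩ := hU τ hτ hτT
  refine ⟨M, fun t hτt htT => ?_⟩
  have ht : 0 < t := hτ.trans_le hτt
  have ht_lt : ENNReal.ofReal t < T :=
    ((ENNReal.ofReal_lt_ofReal_iff (by positivity)).2 (by linarith)).trans_le htT
  filter_upwards [hM t hτt htT, h t ht ht_lt] with x hUx hux
  rw [abs_of_nonneg (hu x t)]
  exact hux.trans ((le_abs_self _).trans hUx)

lemma IsSuperSys.picardIterate_le (h : IsSuperSys N p q u₀ v₀ T U V) (hp : 0 ≤ p) (hq : 0 ≤ q)
    (n : ℕ) {t : ℝ} (ht : 0 < t) (htT : ENNReal.ofReal t < T) :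
    let w := picardIterate p q (fun y => ENNReal.ofReal (u₀ y)) (fun y => ENNReal.ofReal (v₀ y)) n
    (∀ᵐ x, w.1 x t ≤ ENNReal.ofReal (U x t)) ∧ ∀ᵐ x, w.2 x t ≤ ENNReal.ofReal (V x t) := by
  obtain ⟨⟨hU, hV, -⟩, hsuper⟩ := h
  induction n generalizing t with
  | zero => exact ⟨Eventually.of_forall fun _ => bot_le, Eventually.of_forall fun _ => bot_le⟩
  | succ n ih =>
    obtain ⟨hsuperU, hsuperV⟩ := hsuper t ht htT
    simp only [heatS_add_setLIntegral_heatS_rpow_eq_mildSolution ht.le hp hV] at hsuperU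
    simp only [heatS_add_setLIntegral_heatS_rpow_eq_mildSolution ht.le hq hU] at hsuperV
    have ih_lt (s : ℝ) (hs : s ∈ Set.Ioo 0 t) :=
      ih hs.1 ((ENNReal.ofReal_le_ofReal hs.2.le).trans_lt htT)
    simp only [picardIterate_succ, picardMap]
    exact ⟨hsuperU.mono fun x hx => (mildSolution_mono fun s hs => (ih_lt s hs).2.mono
        fun y hy => ENNReal.rpow_le_rpow hy hp).trans hx,
      hsuperV.mono fun x hx => (mildSolution_mono fun s hs => (ih_lt s hs).1.mono
        fun y hy => ENNReal.rpow_le_rpow hy hq).trans hx⟩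

lemma IsSuperSys.picardLimit_le (h : IsSuperSys N p q u₀ v₀ T U V) (hp : 0 ≤ p) (hq : 0 ≤ q)
    {t : ℝ} (ht : 0 < t) (htT : ENNReal.ofReal t < T) :
    let w := picardLimit p q (fun y => ENNReal.ofReal (u₀ y)) (fun y => ENNReal.ofReal (v₀ y))
    (∀ᵐ x, w.1 x t ≤ ENNReal.ofReal (U x t)) ∧ ∀ᵐ x, w.2 x t ≤ ENNReal.ofReal (V x t) := by
  simp only [picardLimit, Prod.fst_iSup, Prod.snd_iSup, iSup_apply, iSup_le_iff, ae_all_iff]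
  exact ⟨fun n => (h.picardIterate_le hp hq n ht htT).1,
    fun n => (h.picardIterate_le hp hq n ht htT).2⟩

lemma duhamelSys_toReal_of_isFixedPt (hp : 0 ≤ p) (hq : 0 ≤ q)
    {w : (Euc N → ℝ → ℝ≥0∞) × (Euc N → ℝ → ℝ≥0∞)}
    (hw : Function.IsFixedPt (picardMap p q (fun y => ENNReal.ofReal (u₀ y))
      (fun y => ENNReal.ofReal (v₀ y))) w) {t : ℝ} (ht : 0 < t)
    (hfin : ∀ s ∈ Set.Ioc 0 t, (∀ᵐ x, w.1 x s ≠ ⊤) ∧ ∀ᵐ x, w.2 x s ≠ ⊤) :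
    DuhamelSys N p q u₀ v₀ (fun x s => (w.1 x s).toReal) (fun x s => (w.2 x s).toReal) t := by
  obtain ⟨hfin₁, hfin₂⟩ := hfin t ⟨ht, le_rfl⟩
  unfold DuhamelSys
  simp only [heatS_add_setLIntegral_heatS_rpow_eq_mildSolution ht.le hp
      fun _ _ => ENNReal.toReal_nonneg,
    heatS_add_setLIntegral_heatS_rpow_eq_mildSolution ht.le hq fun _ _ => ENNReal.toReal_nonneg]
  refine ⟨hfin₁.mono fun x hx => ?_, hfin₂.mono fun x hx => ?_⟩
  · calc ENNReal.ofReal (w.1 x t).toReal = w.1 x t := ENNReal.ofReal_toReal hx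
      _ = mildSolution _ (fun y s => w.2 y s ^ p) x t :=
        congr_fun₂ (congrArg Prod.fst hw.symm) x t
      _ = _ := mildSolution_congr fun s hs => (hfin s ⟨hs.1, hs.2.le⟩).2.mono
        fun y hy => by rw [ENNReal.ofReal_toReal hy]
  · calc ENNReal.ofReal (w.2 x t).toReal = w.2 x t := ENNReal.ofReal_toReal hx
      _ = mildSolution _ (fun y s => w.1 y s ^ q) x t :=
        congr_fun₂ (congrArg Prod.snd hw.symm) x t
      _ = _ := mildSolution_congr fun s hs => (hfin s ⟨hs.1, hs.2.le⟩).1.mono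
        fun y hy => by rw [ENNReal.ofReal_toReal hy]

theorem IsSuperSys.exists_isSolSys_le (h : IsSuperSys N p q u₀ v₀ T U V) (hp : 0 ≤ p)
    (hq : 0 ≤ q) (hu₀ : Measurable u₀) (hv₀ : Measurable v₀) :
    ∃ u v : Euc N → ℝ → ℝ, IsSolSys N p q u₀ v₀ T u v ∧
      ∀ t, 0 < t → ENNReal.ofReal t < T →
        (∀ᵐ x, u x t ≤ U x t) ∧ ∀ᵐ x, v x t ≤ V x t := by
  set w := picardLimit p q (fun y => ENNReal.ofReal (u₀ y)) (fun y => ENNReal.ofReal (v₀ y))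
  obtain ⟨hmeas₁, hmeas₂⟩ : Measurable (Function.uncurry w.1) ∧ Measurable (Function.uncurry w.2) :=
    measurable_picardLimit hu₀.ennreal_ofReal hv₀.ennreal_ofReal
  have hle {t : ℝ} (ht : 0 < t) (htT : ENNReal.ofReal t < T) :
      (∀ᵐ x, w.1 x t ≤ ENNReal.ofReal (U x t)) ∧ ∀ᵐ x, w.2 x t ≤ ENNReal.ofReal (V x t) :=
    h.picardLimit_le hp hq ht htT
  obtain ⟨⟨hU, hV, -, -, hUbdd, hVbdd⟩, -⟩ := h
  have hle_toReal (t : ℝ) (ht : 0 < t) (htT : ENNReal.ofReal t < T) :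
      (∀ᵐ x, (w.1 x t).toReal ≤ U x t) ∧ ∀ᵐ x, (w.2 x t).toReal ≤ V x t :=
    ⟨(hle ht htT).1.mono fun x hx => ENNReal.toReal_le_of_le_ofReal (hU x t) hx,
      (hle ht htT).2.mono fun x hx => ENNReal.toReal_le_of_le_ofReal (hV x t) hx⟩
  refine ⟨fun x t => (w.1 x t).toReal, fun x t => (w.2 x t).toReal,
    ⟨⟨fun _ _ => ENNReal.toReal_nonneg, fun _ _ => ENNReal.toReal_nonneg,
      hmeas₁.ennreal_toReal, hmeas₂.ennreal_toReal,
      hUbdd.of_ae_le (fun _ _ => ENNReal.toReal_nonneg) fun t ht htT => (hle_toReal t ht htT).1,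
      hVbdd.of_ae_le (fun _ _ => ENNReal.toReal_nonneg) fun t ht htT => (hle_toReal t ht htT).2⟩,
      fun t ht htT => ?_⟩, hle_toReal⟩
  refine duhamelSys_toReal_of_isFixedPt hp hq
    (isFixedPt_picardLimit hp hq hu₀.ennreal_ofReal hv₀.ennreal_ofReal) ht fun s hs => ?_
  have hlt := hle hs.1 ((ENNReal.ofReal_le_ofReal hs.2).trans_lt htT)
  exact ⟨hlt.1.mono fun x hx => (hx.trans_lt ENNReal.ofReal_lt_top).ne,
    hlt.2.mono fun x hx => (hx.trans_lt ENNReal.ofReal_lt_top).ne⟩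

lemma IsSolSys.ae_pos {u v : Euc N → ℝ → ℝ} (h : IsSolSys N p q u₀ v₀ T u v)
    (hu₀ : Measurable u₀) (hv₀ : Measurable v₀) (hu₀_pos : ∃ᵐ x, 0 < u₀ x)
    (hv₀_pos : ∃ᵐ x, 0 < v₀ x) {t : ℝ} (ht : 0 < t) (htT : ENNReal.ofReal t < T) :
    ∀ᵐ x, 0 < u x t ∧ 0 < v x t := by
  filter_upwards [(h.2 t ht htT).1, (h.2 t ht htT).2] with x hux hvx
  rw [← ENNReal.ofReal_pos, ← ENNReal.ofReal_pos, hux, hvx]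
  exact ⟨add_pos_of_pos_of_nonneg (heatS_pos ht hu₀ hu₀_pos) zero_le,
    add_pos_of_pos_of_nonneg (heatS_pos ht hv₀ hv₀_pos) zero_le⟩

end Supersolution

section GaussianProfile

variable {N : ℕ}

/-- The Gaussian `A (1+t)^{-a} exp(-κ|x|²/(4(1+t)))` of amplitude `A`, decay rate `a` and
concentration `κ`, from which supersolutions of (S) are built. Writing `|t|` in place of `t` keeps
it nonnegative at all real times, as `PairRegular` demands. -/
def gaussianProfile (A a κ : ℝ) (x : Euc N) (t : ℝ) : ℝ :=
  A * (1 + |t|) ^ (-a) * Real.exp (-(κ / (4 * (1 + |t|))) * ‖x‖ ^ 2)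

lemma measurable_gaussianProfile (A a κ : ℝ) :
    Measurable (Function.uncurry (gaussianProfile (N := N) A a κ)) := by
  unfold gaussianProfile Function.uncurry
  fun_prop

variable {A a κ : ℝ} {x : Euc N} {t : ℝ}

lemma gaussianProfile_nonneg (hA : 0 ≤ A) : 0 ≤ gaussianProfile A a κ x t := by
  unfold gaussianProfile
  positivity

lemma gaussianProfile_pos (hA : 0 < A) : 0 < gaussianProfile A a κ x t := by
  unfold gaussianProfile
  positivity

lemma gaussianProfile_amplitude_add (A' : ℝ) :
    gaussianProfile (A + A') a κ x t = gaussianProfile A a κ x t + gaussianProfile A' a κ x t := by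
  unfold gaussianProfile
  ring

lemma gaussianProfile_le_of_amplitude_le {A' : ℝ} (hAA' : A ≤ A') :
    gaussianProfile A a κ x t ≤ gaussianProfile A' a κ x t := by
  unfold gaussianProfile
  gcongr

lemma gaussianProfile_le_of_decay_le {a' : ℝ} (hA : 0 ≤ A) (haa' : a ≤ a') :
    gaussianProfile A a' κ x t ≤ gaussianProfile A a κ x t := by
  unfold gaussianProfile
  gcongr
  simp

lemma gaussianProfile_le_amplitude (hA : 0 ≤ A) (ha : 0 ≤ a) (hκ : 0 ≤ κ) :
    gaussianProfile A a κ x t ≤ A := by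
  have hdecay : (1 + |t|) ^ (-a) ≤ 1 :=
    Real.rpow_le_one_of_one_le_of_nonpos (by simp) (neg_nonpos.2 ha)
  have hexp : Real.exp (-(κ / (4 * (1 + |t|))) * ‖x‖ ^ 2) ≤ 1 := by
    rw [Real.exp_le_one_iff, neg_mul, neg_nonpos]
    positivity
  calc gaussianProfile A a κ x t ≤ A * 1 * 1 := by unfold gaussianProfile; gcongr
    _ = A := by ring

lemma gaussianProfile_rpow_le {b μ p : ℝ} (hA : 0 ≤ A) (hκ : κ ≤ μ * p) :
    gaussianProfile A b μ x t ^ p ≤ gaussianProfile (A ^ p) (b * p) κ x t := by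
  unfold gaussianProfile
  rw [Real.mul_rpow (by positivity) (by positivity), Real.mul_rpow hA (by positivity),
    ← Real.rpow_mul (by positivity), ← Real.exp_mul, neg_mul b]
  have hexponent : -(μ / (4 * (1 + |t|))) * ‖x‖ ^ 2 * p ≤
      -(κ / (4 * (1 + |t|))) * ‖x‖ ^ 2 := by
    rw [mul_right_comm, neg_mul, div_mul_eq_mul_div]
    gcongr
  gcongr

lemma heatS_gaussianProfile_le {s : ℝ} (hA : 0 ≤ A) (hκ : 0 < κ) (hκ1 : κ ≤ 1) (hs : 0 ≤ s)
    (hst : s < t) :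
    heatS N (t - s) (fun y => gaussianProfile A a κ y s) x ≤
      ENNReal.ofReal (gaussianProfile (A * κ ^ (-(N : ℝ) / 2)) (N / 2) κ x t) *
        ENNReal.ofReal ((1 + s) ^ ((N : ℝ) / 2 - a)) := by
  have ht : 0 ≤ t := hs.trans hst.le
  have hamplitude : 0 ≤ A * (1 + s) ^ (-a) := by positivity
  unfold gaussianProfile
  rw [abs_of_nonneg hs, abs_of_nonneg ht, heatS_const_mul hamplitude]
  refine (mul_le_mul_right (heatS_exp_neg_div_mul_sq_norm_le hκ hκ1 (by positivity)
    (sub_pos.2 hst) x) _).trans_eq ?_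
  rw [← ENNReal.ofReal_mul hamplitude, ← ENNReal.ofReal_mul (by positivity),
    add_add_sub_cancel, Real.mul_rpow hκ.le (by positivity),
    Real.div_rpow (by positivity) (by positivity), sub_eq_neg_add,
    Real.rpow_add (by positivity) (-a), neg_div, Real.rpow_neg (x := 1 + s) (by positivity) (N / 2),
    div_inv_eq_mul]
  congr 1
  ring

lemma setLIntegral_Ioo_one_add_rpow_le {d : ℝ} (hd : 0 < d) (ht : 0 ≤ t) :
    ∫⁻ s in Set.Ioo 0 t, ENNReal.ofReal ((1 + s) ^ (d - 1)) ≤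
      ENNReal.ofReal ((1 + t) ^ d / d) := by
  have hintegrable : IntervalIntegrable (fun s : ℝ => (1 + s) ^ (d - 1)) volume 0 t := by
    refine ContinuousOn.intervalIntegrable (ContinuousOn.rpow_const (by fun_prop) fun s hs => ?_)
    rw [Set.uIcc_of_le ht] at hs
    exact Or.inl (by linarith [hs.1])
  have hintegral : ∫ s in (0 : ℝ)..t, (1 + s) ^ (d - 1) = ((1 + t) ^ d - 1) / d := by
    rw [intervalIntegral.integral_comp_add_left (fun s : ℝ => s ^ (d - 1)) 1,
      integral_rpow (Or.inl (by linarith))]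
    simp
  rw [restrict_Ioo_eq_restrict_Ioc, ← ofReal_integral_eq_lintegral_ofReal
      ((intervalIntegrable_iff_integrableOn_Ioc_of_le ht).1 hintegrable),
    ← intervalIntegral.integral_of_le ht, hintegral]
  · gcongr
    linarith
  · filter_upwards [ae_restrict_mem measurableSet_Ioc] with s hs
    exact Real.rpow_nonneg (by linarith [hs.1]) _

lemma setLIntegral_heatS_gaussianProfile_le (hA : 0 ≤ A) (hκ : 0 < κ) (hκ1 : κ ≤ 1)
    (ha : a < (N : ℝ) / 2) (ht : 0 ≤ t) :
    ∫⁻ s in Set.Ioo 0 t, heatS N (t - s) (fun y => gaussianProfile A (a + 1) κ y s) x ≤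
      ENNReal.ofReal
        (gaussianProfile (A * (κ ^ (-(N : ℝ) / 2) / ((N : ℝ) / 2 - a))) a κ x t) := by
  have hgap : 0 < (N : ℝ) / 2 - a := sub_pos.2 ha
  have hprofile : 0 ≤ gaussianProfile (A * κ ^ (-(N : ℝ) / 2)) (N / 2) κ x t :=
    gaussianProfile_nonneg (by positivity)
  calc _ ≤ ∫⁻ s in Set.Ioo 0 t,
        ENNReal.ofReal (gaussianProfile (A * κ ^ (-(N : ℝ) / 2)) (N / 2) κ x t) *
          ENNReal.ofReal ((1 + s) ^ ((N : ℝ) / 2 - a - 1)) := by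
        refine setLIntegral_mono' measurableSet_Ioo fun s hs => ?_
        rw [sub_sub]
        exact heatS_gaussianProfile_le hA hκ hκ1 hs.1.le hs.2
    _ ≤ ENNReal.ofReal (gaussianProfile (A * κ ^ (-(N : ℝ) / 2)) (N / 2) κ x t) *
          ENNReal.ofReal ((1 + t) ^ ((N : ℝ) / 2 - a) / ((N : ℝ) / 2 - a)) := by
        rw [lintegral_const_mul' _ _ ENNReal.ofReal_ne_top]
        gcongr
        exact setLIntegral_Ioo_one_add_rpow_le hgap ht
    _ = _ := by
        have hdecay : (1 + t) ^ (-((N : ℝ) / 2)) * (1 + t) ^ ((N : ℝ) / 2 - a) =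
            (1 + t) ^ (-a) := by
          rw [← Real.rpow_add (by positivity)]
          congr 1
          ring
        rw [← ENNReal.ofReal_mul hprofile]
        unfold gaussianProfile
        rw [abs_of_nonneg ht, ← hdecay]
        congr 1
        ring

end GaussianProfile

section GaussianSupersolution

variable {N : ℕ}

lemma heatS_add_setLIntegral_heatS_gaussianProfile_rpow_le {p A B a b κ μ t : ℝ} (hA : 0 ≤ A)
    (hB : 0 ≤ B) (hκ : 0 < κ) (hκ1 : κ ≤ 1) (hκμ : κ ≤ μ * p) (ha : a < (N : ℝ) / 2)
    (hab : b * p = a + 1)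
    (hBA : B ^ p * (2 * (κ ^ (-(N : ℝ) / 2) / ((N : ℝ) / 2 - a))) ≤ A) (ht : 0 < t) (x : Euc N) :
    heatS N t (fun y => gaussianProfile (A / 2 * κ ^ ((N : ℝ) / 2)) a κ y 0) x +
        ∫⁻ s in Set.Ioo 0 t, heatS N (t - s) (fun y => gaussianProfile B b μ y s ^ p) x ≤
      ENNReal.ofReal (gaussianProfile A a κ x t) := by
  have hhalf : 0 ≤ gaussianProfile (A / 2) a κ x t := gaussianProfile_nonneg (by positivity)
  have hinit : heatS N t (fun y => gaussianProfile (A / 2 * κ ^ ((N : ℝ) / 2)) a κ y 0) x ≤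
      ENNReal.ofReal (gaussianProfile (A / 2) a κ x t) := by
    have hheat := heatS_gaussianProfile_le (A := A / 2 * κ ^ ((N : ℝ) / 2)) (a := a) (x := x)
      (by positivity) hκ hκ1 le_rfl ht
    rw [sub_zero, add_zero, Real.one_rpow, ENNReal.ofReal_one, mul_one, mul_assoc,
      ← Real.rpow_add hκ, neg_div, add_neg_cancel, Real.rpow_zero, mul_one] at hheat
    exact hheat.trans (ENNReal.ofReal_le_ofReal
      (gaussianProfile_le_of_decay_le (by positivity) ha.le))
  have hsource :
      ∫⁻ s in Set.Ioo 0 t, heatS N (t - s) (fun y => gaussianProfile B b μ y s ^ p) x ≤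
        ENNReal.ofReal (gaussianProfile (A / 2) a κ x t) := by
    calc _ ≤ ∫⁻ s in Set.Ioo 0 t,
          heatS N (t - s) (fun y => gaussianProfile (B ^ p) (a + 1) κ y s) x := by
          rw [← hab]
          exact setLIntegral_mono' measurableSet_Ioo fun s hs =>
            heatS_mono (sub_nonneg.2 hs.2.le) fun y => gaussianProfile_rpow_le hB hκμ
      _ ≤ _ := setLIntegral_heatS_gaussianProfile_le (by positivity) hκ hκ1 ha ht.le
      _ ≤ _ := ENNReal.ofReal_le_ofReal (gaussianProfile_le_of_amplitude_le (by linarith))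
  calc _ ≤ _ := add_le_add hinit hsource
    _ = ENNReal.ofReal (gaussianProfile A a κ x t) := by
      rw [← ENNReal.ofReal_add hhalf hhalf, ← gaussianProfile_amplitude_add, add_halves]

lemma locBdd_gaussianProfile {A a κ : ℝ} {T : ℝ≥0∞} (hA : 0 ≤ A) (ha : 0 ≤ a) (hκ : 0 ≤ κ) :
    LocBdd N T (gaussianProfile A a κ) :=
  fun _ _ _ => ⟨A, fun t _ _ => Eventually.of_forall fun x => by
    rw [abs_of_nonneg (gaussianProfile_nonneg hA)]
    exact gaussianProfile_le_amplitude hA ha hκ⟩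

lemma exists_pos_rpow_mul_eq {p q C D : ℝ} (hpq : p * q ≠ 1) (hC : 0 < C) (hD : 0 < D) :
    ∃ A B : ℝ, 0 < A ∧ 0 < B ∧ B ^ p * C = A ∧ A ^ q * D = B := by
  have hE : 0 < D ^ p * C := by positivity
  obtain ⟨A, hA, hA_rpow⟩ : ∃ A : ℝ, 0 < A ∧ A ^ (1 - p * q) = D ^ p * C :=
    ⟨(D ^ p * C) ^ (1 - p * q)⁻¹, by positivity,
      Real.rpow_inv_rpow hE.le (sub_ne_zero.2 hpq.symm)⟩
  refine ⟨A, A ^ q * D, hA, by positivity, ?_, rfl⟩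
  calc (A ^ q * D) ^ p * C = A ^ (q * p) * (D ^ p * C) := by
        rw [Real.mul_rpow (by positivity) hD.le, ← Real.rpow_mul hA.le, mul_assoc]
    _ = A := by
        rw [← hA_rpow, ← Real.rpow_add hA, mul_comm q p, add_sub_cancel, Real.rpow_one]

lemma min_one_le_min_one_mul {p q : ℝ} (hpq : 1 ≤ p * q) :
    min p 1 ≤ min q 1 * p := by
  rcases min_choice q 1 with h | h
  · rw [h, mul_comm]
    exact (min_le_right _ _).trans hpq
  · rw [h, one_mul]
    exact min_le_left _ _

lemma add_one_div_mul_sub_one_mul {p q : ℝ} (hpq : p * q ≠ 1) :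
    (q + 1) / (p * q - 1) * p = (p + 1) / (p * q - 1) + 1 := by
  rw [div_mul_eq_mul_div, div_add_one (sub_ne_zero.2 hpq)]
  congr 1
  ring

lemma exists_isSuperSys_gaussianProfile {p q : ℝ} (T : ℝ≥0∞) (hp : 0 < p) (hq : 0 < q)
    (hpq : 1 < p * q) (hpN : (p + 1) / (p * q - 1) < (N : ℝ) / 2)
    (hqN : (q + 1) / (p * q - 1) < (N : ℝ) / 2) :
    ∃ A₀ B₀ A B a b κ μ : ℝ, 0 < A₀ ∧ 0 < B₀ ∧
      IsSuperSys N p q (fun y => gaussianProfile A₀ a κ y 0) (fun y => gaussianProfile B₀ b μ y 0)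
        T (gaussianProfile A a κ) (gaussianProfile B b μ) := by
  have hqp : 1 < q * p := by rwa [mul_comm]
  have hgap : 0 < p * q - 1 := sub_pos.2 hpq
  have hba := add_one_div_mul_sub_one_mul hpq.ne'
  have hab := add_one_div_mul_sub_one_mul hqp.ne'
  rw [mul_comm q p] at hab
  have ha : 0 ≤ (p + 1) / (p * q - 1) := div_nonneg (by positivity) hgap.le
  have hb : 0 ≤ (q + 1) / (p * q - 1) := div_nonneg (by positivity) hgap.le
  generalize (p + 1) / (p * q - 1) = a at *
  generalize (q + 1) / (p * q - 1) = b at *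
  have hκ : 0 < min p 1 := lt_min hp one_pos
  have hμ : 0 < min q 1 := lt_min hq one_pos
  obtain ⟨A, B, hA, hB, hBA, hAB⟩ := exists_pos_rpow_mul_eq hpq.ne'
    (C := 2 * (min p 1 ^ (-(N : ℝ) / 2) / ((N : ℝ) / 2 - a)))
    (D := 2 * (min q 1 ^ (-(N : ℝ) / 2) / ((N : ℝ) / 2 - b)))
    (mul_pos two_pos (div_pos (by positivity) (sub_pos.2 hpN)))
    (mul_pos two_pos (div_pos (by positivity) (sub_pos.2 hqN)))
  refine ⟨A / 2 * min p 1 ^ ((N : ℝ) / 2), B / 2 * min q 1 ^ ((N : ℝ) / 2), A, B, a, b,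
    min p 1, min q 1, by positivity, by positivity,
    ⟨fun _ _ => gaussianProfile_nonneg hA.le, fun _ _ => gaussianProfile_nonneg hB.le,
      measurable_gaussianProfile A a _, measurable_gaussianProfile B b _,
      locBdd_gaussianProfile hA.le ha hκ.le, locBdd_gaussianProfile hB.le hb hμ.le⟩,
    fun t ht _ => ⟨Eventually.of_forall fun x => ?_, Eventually.of_forall fun x => ?_⟩⟩
  · exact heatS_add_setLIntegral_heatS_gaussianProfile_rpow_le hA.le hB.le hκ (min_le_right _ _)
      (min_one_le_min_one_mul hpq.le) hpN hba hBA.le ht x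
  · exact heatS_add_setLIntegral_heatS_gaussianProfile_rpow_le hB.le hA.le hμ (min_le_right _ _)
      (min_one_le_min_one_mul hqp.le) hqN hab hAB.le ht x

lemma add_one_div_mul_sub_one_lt_half {p q r n : ℝ} (hn : 0 < n) (hpq : 1 < p * q)
    (hr : r ≤ max p q) (hr0 : 0 ≤ r) (hfuj : 2 / n < (p * q - 1) / (max p q + 1)) :
    (r + 1) / (p * q - 1) < n / 2 := by
  have hmax : 0 < max p q + 1 := by linarith
  rw [div_lt_div_iff₀ hn hmax] at hfuj
  rw [div_lt_div_iff₀ (sub_pos.2 hpq) two_pos]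
  linarith

end GaussianSupersolution

/-- Theorem 3.2 (ii) for `Ω = ℝ^N`: if `pq > 1` and
`(pq-1)/(max{p,q}+1) > 2/N`, then for some nonnegative data, not both identically zero,
the system (S) possesses a global-in-time positive solution. -/
theorem statement15 (N : ℕ) (hN : 1 ≤ N) (p q : ℝ) (hp : 0 ≤ p) (hq : 0 ≤ q)
    (hpq : 1 < p * q) (hfuj : 2 / (N : ℝ) < (p * q - 1) / (max p q + 1)) :
    ∃ u₀ v₀ : Euc N → ℝ, Measurable u₀ ∧ Measurable v₀ ∧
      (∀ x, 0 ≤ u₀ x) ∧ (∀ x, 0 ≤ v₀ x) ∧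
      ¬((∀ x, u₀ x = 0) ∧ (∀ x, v₀ x = 0)) ∧
      ∃ u v : Euc N → ℝ → ℝ, IsSolSys N p q u₀ v₀ ⊤ u v ∧
        ∀ t : ℝ, 0 < t →
          ∀ᵐ x ∂(volume : Measure (Euc N)), 0 < u x t ∧ 0 < v x t := by
  have hp_pos : 0 < p := pos_of_mul_pos_left (one_pos.trans hpq) hq
  have hq_pos : 0 < q := pos_of_mul_pos_right (one_pos.trans hpq) hp
  have hN_pos : (0 : ℝ) < N := by exact_mod_cast hN
  obtain ⟨A₀, B₀, A, B, a, b, κ, μ, hA₀, hB₀, hsuper⟩ :=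
    exists_isSuperSys_gaussianProfile (N := N) ⊤ hp_pos hq_pos hpq
      (add_one_div_mul_sub_one_lt_half hN_pos hpq (le_max_left p q) hp hfuj)
      (add_one_div_mul_sub_one_lt_half hN_pos hpq (le_max_right p q) hq hfuj)
  set u₀ : Euc N → ℝ := fun y => gaussianProfile A₀ a κ y 0
  set v₀ : Euc N → ℝ := fun y => gaussianProfile B₀ b μ y 0
  have hu₀ : Measurable u₀ := (measurable_gaussianProfile A₀ a κ).of_uncurry_right
  have hv₀ : Measurable v₀ := (measurable_gaussianProfile B₀ b μ).of_uncurry_right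
  have hu₀_pos (x) : 0 < u₀ x := gaussianProfile_pos hA₀
  have hv₀_pos (x) : 0 < v₀ x := gaussianProfile_pos hB₀
  obtain ⟨u, v, hsol, -⟩ := hsuper.exists_isSolSys_le hp hq hu₀ hv₀
  exact ⟨u₀, v₀, hu₀, hv₀, fun x => (hu₀_pos x).le, fun x => (hv₀_pos x).le,
    fun h => (hu₀_pos 0).ne' (h.1 0), u, v, hsol, fun t ht =>
      hsol.ae_pos hu₀ hv₀ (Frequently.of_forall hu₀_pos) (Frequently.of_forall hv₀_pos) ht
        ENNReal.ofReal_lt_top⟩
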